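/- Suppose g_r⁺ > 0 for every r = 1,…,s and the direction vector satisfies condition (9): y_{ro}/g_r⁺ ≤ 1 for every r. Let (λ*, τ⁻*, τ⁺*) ∈ F_o(g) minimize the linear objective ℓ over F_o(g). Then τ_r⁺* ≤ 1 for every r = 1,…,s; consequently 1 − (1/s)Σ_r τ_r⁺* ≥ 0, and if moreover 1 − (1/s)Σ_r τ_r⁺* > 0 then the super-efficiency index f(τ⁻*, τ⁺*) = (1 + (1/m)Σ_i τ_i⁻*)/(1 − (1/s)Σ_r τ_r⁺*) is at least 1 (well-definedness of the measure). -/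

import Mathlib

open Finset

/-- GDSE feasible-set predicate: the evaluated DMU has input vector `u` and output
vector `v`, benchmarked against the reference set `J = univ \ {o}` of the data
`x`, `y`, with RTS bounds `L ≤ Σλ ≤ U` and direction `(gm, gp)`. -/
def GDSEFeas {n m s : ℕ} (x : Fin n → Fin m → ℝ) (y : Fin n → Fin s → ℝ)
    (o : Fin n) (L U : ℝ) (gm : Fin m → ℝ) (gp : Fin s → ℝ)
    (u : Fin m → ℝ) (v : Fin s → ℝ)
    (lam : Fin n → ℝ) (tm : Fin m → ℝ) (tp : Fin s → ℝ) : Prop :=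
  (∀ j ∈ Finset.univ.erase o, 0 ≤ lam j) ∧
  (∀ i, 0 ≤ tm i) ∧ (∀ r, 0 ≤ tp r) ∧
  (∀ i, ∑ j ∈ Finset.univ.erase o, lam j * x j i ≤ u i + tm i * gm i) ∧
  (∀ r, v r - tp r * gp r ≤ ∑ j ∈ Finset.univ.erase o, lam j * y j r) ∧
  L ≤ ∑ j ∈ Finset.univ.erase o, lam j ∧
  ∑ j ∈ Finset.univ.erase o, lam j ≤ U

/-- The linear objective ℓ(τ⁻, τ⁺) = (1/m) Σᵢ τᵢ⁻ + (1/s) Σᵣ τᵣ⁺. -/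
noncomputable def linObj (m s : ℕ) (tm : Fin m → ℝ) (tp : Fin s → ℝ) : ℝ :=
  (1 / (m : ℝ)) * ∑ i, tm i + (1 / (s : ℝ)) * ∑ r, tp r

/-- The fractional objective f(τ⁻, τ⁺) = (1 + (1/m) Σᵢ τᵢ⁻) / (1 - (1/s) Σᵣ τᵣ⁺). -/
noncomputable def fracObj (m s : ℕ) (tm : Fin m → ℝ) (tp : Fin s → ℝ) : ℝ :=
  (1 + (1 / (m : ℝ)) * ∑ i, tm i) / (1 - (1 / (s : ℝ)) * ∑ r, tp r)

/-- The denominator of the fractional objective. -/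
noncomputable def fracDen (s : ℕ) (tp : Fin s → ℝ) : ℝ :=
  1 - (1 / (s : ℝ)) * ∑ r, tp r

/-- Values of the fractional objective over the feasible points with positive denominator. -/
def fracVals {n m s : ℕ} (x : Fin n → Fin m → ℝ) (y : Fin n → Fin s → ℝ)
    (o : Fin n) (L U : ℝ) (gm : Fin m → ℝ) (gp : Fin s → ℝ)
    (u : Fin m → ℝ) (v : Fin s → ℝ) : Set ℝ :=
  {w : ℝ | ∃ (lam : Fin n → ℝ) (tm : Fin m → ℝ) (tp : Fin s → ℝ),
    GDSEFeas x y o L U gm gp u v lam tm tp ∧ 0 < fracDen s tp ∧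
    w = fracObj m s tm tp}

/-- Values of the linear objective over the feasible points. -/
def linVals {n m s : ℕ} (x : Fin n → Fin m → ℝ) (y : Fin n → Fin s → ℝ)
    (o : Fin n) (L U : ℝ) (gm : Fin m → ℝ) (gp : Fin s → ℝ)
    (u : Fin m → ℝ) (v : Fin s → ℝ) : Set ℝ :=
  {w : ℝ | ∃ (lam : Fin n → ℝ) (tm : Fin m → ℝ) (tp : Fin s → ℝ),
    GDSEFeas x y o L U gm gp u v lam tm tp ∧ w = linObj m s tm tp}

/-!
The nonnegative reference outputs make the output constraint `v r - τ r * g⁺ r ≤ ∑ λ_j y_j r` hold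
for free at any `τ r` with `v r ≤ τ r * g⁺ r`. Truncating the output slacks of a feasible point at
such a level therefore keeps it feasible, and the linear objective strictly decreases unless nothing
was cut off. Condition (9) says that the level `1` is admissible.
-/

theorem linObj_strictMono_right {m s : ℕ} (tm : Fin m → ℝ) : StrictMono (linObj m s tm) := by
  intro tp tp' hlt
  obtain ⟨-, r, -⟩ := Pi.lt_def.mp hlt
  have hs : (0 : ℝ) < s := Nat.cast_pos.mpr r.pos
  have hsum : ∑ r, tp r < ∑ r, tp' r := Fintype.sum_strictMono hlt
  unfold linObj
  gcongr

theorem fracDen_nonneg_of_le_one {s : ℕ} {tp : Fin s → ℝ} (htp : ∀ r, tp r ≤ 1) :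
    0 ≤ fracDen s tp := by
  have hsum : ∑ r, tp r ≤ (s : ℝ) := by
    simpa using sum_le_card_nsmul univ tp 1 fun r _ => htp r
  rw [fracDen, sub_nonneg, one_div_mul_eq_div]
  exact div_le_one_of_le₀ hsum s.cast_nonneg

theorem one_le_fracObj {m s : ℕ} {tm : Fin m → ℝ} {tp : Fin s → ℝ}
    (htm : ∀ i, 0 ≤ tm i) (htp : ∀ r, 0 ≤ tp r) (hden : 0 < fracDen s tp) :
    1 ≤ fracObj m s tm tp := by
  have hinput : 0 ≤ 1 / (m : ℝ) * ∑ i, tm i :=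
    mul_nonneg (by positivity) (sum_nonneg fun i _ => htm i)
  have houtput : 0 ≤ 1 / (s : ℝ) * ∑ r, tp r :=
    mul_nonneg (by positivity) (sum_nonneg fun r _ => htp r)
  rw [fracDen] at hden
  rw [fracObj, one_le_div hden]
  linarith

namespace GDSEFeas

variable {n m s : ℕ} {x : Fin n → Fin m → ℝ} {y : Fin n → Fin s → ℝ} {o : Fin n} {L U : ℝ}
  {gm : Fin m → ℝ} {gp : Fin s → ℝ} {u : Fin m → ℝ} {v : Fin s → ℝ}
  {lam : Fin n → ℝ} {tm : Fin m → ℝ} {tp c : Fin s → ℝ}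

theorem inf_outputSlack (hfeas : GDSEFeas x y o L U gm gp u v lam tm tp)
    (hy : ∀ j ≠ o, ∀ r, 0 ≤ y j r) (hc : ∀ r, 0 ≤ c r) (hv : ∀ r, v r ≤ c r * gp r) :
    GDSEFeas x y o L U gm gp u v lam tm (tp ⊓ c) := by
  obtain ⟨hlam, htm, htp, hinput, houtput, hL, hU⟩ := hfeas
  refine ⟨hlam, htm, fun r => le_min (htp r) (hc r), hinput, fun r => ?_, hL, hU⟩
  have hbenchmark : 0 ≤ ∑ j ∈ univ.erase o, lam j * y j r :=
    sum_nonneg fun j hj => mul_nonneg (hlam j hj) (hy j (ne_of_mem_erase hj) r)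
  rw [Pi.inf_apply]
  rcases min_choice (tp r) (c r) with hmin | hmin
  · rw [hmin]
    exact houtput r
  · rw [hmin]
    exact (sub_nonpos.mpr (hv r)).trans hbenchmark

theorem outputSlack_le_of_minimal (hfeas : GDSEFeas x y o L U gm gp u v lam tm tp)
    (hmin : ∀ tp', GDSEFeas x y o L U gm gp u v lam tm tp' →
      linObj m s tm tp ≤ linObj m s tm tp')
    (hy : ∀ j ≠ o, ∀ r, 0 ≤ y j r) (hc : ∀ r, 0 ≤ c r) (hv : ∀ r, v r ≤ c r * gp r) :
    tp ≤ c := by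
  have hle : linObj m s tm tp ≤ linObj m s tm (tp ⊓ c) :=
    hmin _ (hfeas.inf_outputSlack hy hc hv)
  by_contra hnot
  exact hle.not_gt (linObj_strictMono_right tm (inf_lt_left.mpr hnot))

end GDSEFeas

theorem stmt15_general {n m s : ℕ}
    (x : Fin n → Fin m → ℝ) (y : Fin n → Fin s → ℝ) (o : Fin n)
    (hy : ∀ j ≠ o, ∀ r, 0 ≤ y j r) (L U : ℝ) (gm : Fin m → ℝ) (gp : Fin s → ℝ)
    (u : Fin m → ℝ) (v : Fin s → ℝ) (hcond : ∀ r, v r ≤ gp r)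
    (lam : Fin n → ℝ) (tm : Fin m → ℝ) (tp : Fin s → ℝ)
    (hfeas : GDSEFeas x y o L U gm gp u v lam tm tp)
    (hmin : ∀ tp', GDSEFeas x y o L U gm gp u v lam tm tp' →
      linObj m s tm tp ≤ linObj m s tm tp') :
    (∀ r : Fin s, tp r ≤ 1) ∧ 0 ≤ fracDen s tp ∧
      (0 < fracDen s tp → 1 ≤ fracObj m s tm tp) := by
  have htp : tp ≤ 1 :=
    hfeas.outputSlack_le_of_minimal hmin hy (fun _ => zero_le_one)
      fun r => (hcond r).trans_eq (one_mul _).symm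
  obtain ⟨-, htm_nonneg, htp_nonneg, -⟩ := hfeas
  exact ⟨htp, fracDen_nonneg_of_le_one htp, one_le_fracObj htm_nonneg htp_nonneg⟩

/-- well-definedness: if gᵣ⁺ > 0 and y_{ro}/gᵣ⁺ ≤ 1 for every r,
and (λ*, τ⁻*, τ⁺*) minimizes the linear objective over F_o(g), then τᵣ⁺* ≤ 1
for every r; consequently 1 - (1/s) Σᵣ τᵣ⁺* ≥ 0, and if this denominator is
positive then f(τ⁻*, τ⁺*) ≥ 1. -/
theorem stmt15 {n m s : ℕ}
    (x : Fin n → Fin m → ℝ) (y : Fin n → Fin s → ℝ) (o : Fin n)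
    (hx : ∀ j i, 0 ≤ x j i) (hy : ∀ j r, 0 ≤ y j r)
    (L U : ℝ) (hL0 : 0 ≤ L) (hL1 : L ≤ 1) (hU : 1 ≤ U)
    (gm : Fin m → ℝ) (gp : Fin s → ℝ)
    (hgm : ∀ i, 0 ≤ gm i) (hgp : ∀ r, 0 < gp r)
    (hcond : ∀ r, y o r / gp r ≤ 1)
    (lam : Fin n → ℝ) (tm : Fin m → ℝ) (tp : Fin s → ℝ)
    (hfeas : GDSEFeas x y o L U gm gp (x o) (y o) lam tm tp)
    (hopt : ∀ (lam' : Fin n → ℝ) (tm' : Fin m → ℝ) (tp' : Fin s → ℝ),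
      GDSEFeas x y o L U gm gp (x o) (y o) lam' tm' tp' →
      linObj m s tm tp ≤ linObj m s tm' tp') :
    (∀ r : Fin s, tp r ≤ 1) ∧ 0 ≤ fracDen s tp ∧
      (0 < fracDen s tp → 1 ≤ fracObj m s tm tp) := by
  exact stmt15_general x y o (fun j _ => hy j) L U gm gp (x o) (y o)
    (fun r => (div_le_one (hgp r)).mp (hcond r)) lam tm tp hfeas (hopt lam tm)
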